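/- arXiv:1712.03090 — 5 statements merged into one kernel-verified Lean document; each statement's English description precedes it below -/
import Mathlib

section
/- Let R, P_c, T_c > 0 and m ≥ 0, and let a(T) = 0.45724·(R²T_c²/P_c)·(1 + m(1 − √(T/T_c)))² for T > 0. Then for every T > 0 with 1 + m(1 − √(T/T_c)) ≠ 0, the second derivative of a satisfies a''(T) = (m·a(T)/(2T·√(T·T_c)))·(1 + m)/(1 + m(1 − √(T/T_c)))². -/
/-!
In the reduced temperature `x = T / Tc` the energy parameter is a constant multiple of
`α(x) = (1 + m (1 - √x))²`. The derivative `α'(x) = m (m - (1 + m) / √x)` is affine in `1 / √x`, so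
`α''(x) = m (1 + m) / (2 x √x)`. Rescaling by `Tc` turns `Tc² x √x` into `T √(T Tc)`, and dividing
`a(T)` by `α(x) ≠ 0` recovers the constant.
-/

open scoped Topology

/-- The Soave alpha function of a cubic equation of state, carrying the temperature dependence of
the energy parameter. Its argument `x` is the reduced temperature `T / Tc`. -/
noncomputable def soaveAlpha (m x : ℝ) : ℝ :=
  (1 + m * (1 - √x)) ^ 2

theorem hasDerivAt_soaveAlpha (m : ℝ) {x : ℝ} (hx : 0 < x) :
    HasDerivAt (soaveAlpha m) (m * (m - (1 + m) / √x)) x := by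
  have hsqrt : √x ≠ 0 := (Real.sqrt_pos.mpr hx).ne'
  have hpow := ((((Real.hasDerivAt_sqrt hx.ne').const_sub 1).const_mul m).const_add 1).pow 2
  refine hpow.congr_deriv ?_
  field_simp
  ring

theorem hasDerivAt_deriv_soaveAlpha (m : ℝ) {x : ℝ} (hx : 0 < x) :
    HasDerivAt (deriv (soaveAlpha m)) (m * (1 + m) / (2 * x * √x)) x := by
  have hsqrt : √x ≠ 0 := (Real.sqrt_pos.mpr hx).ne'
  have hderiv : deriv (soaveAlpha m) =ᶠ[𝓝 x] fun y ↦ m * (m - (1 + m) * (√y)⁻¹) := by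
    filter_upwards [lt_mem_nhds hx] with y hy
    rw [(hasDerivAt_soaveAlpha m hy).deriv, div_eq_mul_inv]
  have hinv :=
    ((((Real.hasDerivAt_sqrt hx.ne').fun_inv hsqrt).const_mul (1 + m)).const_sub m).const_mul m
  refine (hinv.congr_of_eventuallyEq hderiv).congr_deriv ?_
  rw [Real.sq_sqrt hx.le]
  field_simp

theorem hasDerivAt_deriv_const_mul_comp_div {𝕜 : Type*} [NontriviallyNormedField 𝕜]
    (K c : 𝕜) {f : 𝕜 → 𝕜} {f'' t : 𝕜} (hf : HasDerivAt (deriv f) f'' (t / c)) :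
    HasDerivAt (deriv fun s ↦ K * f (s / c)) (K * f'' / c ^ 2) t := by
  have hderiv : (deriv fun s ↦ K * f (s / c)) = fun s ↦ K * (c⁻¹ * deriv f (s / c)) := by
    funext s
    simp only [div_eq_inv_mul, deriv_const_mul_field, deriv_comp_mul_left, smul_eq_mul]
  rw [hderiv]
  have hcomp := hf.comp t ((hasDerivAt_id t).div_const c)
  exact ((hcomp.const_mul c⁻¹).const_mul K).congr_deriv (by ring)

theorem mul_sqrt_div_eq_sqrt_mul (x : ℝ) {y : ℝ} (hy : 0 ≤ y) : y * √(x / y) = √(x * y) := by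
  rw [Real.sqrt_div' x hy, Real.sqrt_mul' x hy, mul_div_left_comm, Real.div_sqrt]

theorem pr_energy_param_second_deriv_general {K Tc m T : ℝ} {a : ℝ → ℝ} (hTc : 0 < Tc) (hT : 0 < T)
    (ha : a =ᶠ[𝓝 T] fun t ↦ K * (1 + m * (1 - √(t / Tc))) ^ 2)
    (hden : 1 + m * (1 - √(T / Tc)) ≠ 0) :
    HasDerivAt (deriv a)
      ((m * a T / (2 * T * √(T * Tc))) * ((1 + m) / (1 + m * (1 - √(T / Tc))) ^ 2)) T := by
  have hx : 0 < T / Tc := div_pos hT hTc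
  have hsqrt : √(T / Tc) ≠ 0 := (Real.sqrt_pos.mpr hx).ne'
  have hscaled :=
    hasDerivAt_deriv_const_mul_comp_div K Tc (hasDerivAt_deriv_soaveAlpha m hx)
  refine (hscaled.congr_of_eventuallyEq ha.deriv).congr_deriv ?_
  rw [ha.eq_of_nhds, ← mul_sqrt_div_eq_sqrt_mul T hTc.le]
  field_simp

/-- Peng–Robinson energy parameter: second derivative formula
`a''(T) = (m·a(T)/(2T·√(T·T_c)))·(1 + m)/(1 + m(1 − √(T/T_c)))²` for `T > 0`. -/
theorem pr_energy_param_second_deriv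
    (R Pc Tc m : ℝ) (hR : 0 < R) (hPc : 0 < Pc) (hTc : 0 < Tc) (hm : 0 ≤ m)
    (a : ℝ → ℝ)
    (ha : ∀ T : ℝ, 0 < T →
      a T = 0.45724 * (R ^ 2 * Tc ^ 2 / Pc) * (1 + m * (1 - Real.sqrt (T / Tc))) ^ 2)
    (T : ℝ) (hT : 0 < T) (hden : 1 + m * (1 - Real.sqrt (T / Tc)) ≠ 0) :
    deriv (deriv a) T =
      (m * a T / (2 * T * Real.sqrt (T * Tc))) *
        ((1 + m) / (1 + m * (1 - Real.sqrt (T / Tc))) ^ 2) :=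
  (pr_energy_param_second_deriv_general hTc hT ((lt_mem_nhds hT).mono ha) hden).deriv
end

section
/- Fix a ≥ 0 and b > 0, and let F(n) = (a·n/(2√2·b))·ln((1 + (1 − √2)bn)/(1 + (1 + √2)bn)). Then F is concave on the interval (0, 1/b). -/
/-!
Put `u = 1 + (1 - √2)bn` and `v = 1 + (1 + √2)bn`. Since `u - v = -2√2 bn`, the attraction
contribution equals `-(a / (8b²)) (u - v) log (u / v)`. The function `(u - v) log (u / v)` is the
perspective `v g(u / v)` of the convex function `g x = (x - 1) log x = x log x - log x`, so it is
jointly convex in `u, v > 0`; and `u`, `v` are affine in `n`.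
-/

open Set

section Perspective

variable {𝕜 E β : Type*} [Field 𝕜] [AddCommMonoid E] [Module 𝕜 E]

lemma inv_smul_smul_add_smul {t₁ t₂ : 𝕜} (ht₁ : t₁ ≠ 0) (ht₂ : t₂ ≠ 0) (x₁ x₂ : E) (c₁ c₂ : 𝕜) :
    (c₁ * t₁ + c₂ * t₂)⁻¹ • (c₁ • x₁ + c₂ • x₂) =
      (c₁ * t₁ / (c₁ * t₁ + c₂ * t₂)) • t₁⁻¹ • x₁ +
        (c₂ * t₂ / (c₁ * t₁ + c₂ * t₂)) • t₂⁻¹ • x₂ := by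
  simp only [smul_add, smul_smul]
  congr 2 <;> field_simp

variable [LinearOrder 𝕜] [IsStrictOrderedRing 𝕜] {s : Set E}

lemma convex_perspective_domain (hs : Convex 𝕜 s) :
    Convex 𝕜 {p : E × 𝕜 | 0 < p.2 ∧ p.2⁻¹ • p.1 ∈ s} := by
  rintro ⟨x₁, t₁⟩ ⟨ht₁, hx₁⟩ ⟨x₂, t₂⟩ ⟨ht₂, hx₂⟩ c₁ c₂ hc₁ hc₂ hc
  have ht : 0 < c₁ * t₁ + c₂ * t₂ := convex_Ioi 0 ht₁ ht₂ hc₁ hc₂ hc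
  refine ⟨ht, ?_⟩
  simp only [Prod.smul_mk, Prod.mk_add_mk, smul_eq_mul]
  rw [inv_smul_smul_add_smul ht₁.ne' ht₂.ne']
  exact hs hx₁ hx₂ (div_nonneg (mul_nonneg hc₁ ht₁.le) ht.le)
    (div_nonneg (mul_nonneg hc₂ ht₂.le) ht.le) (by rw [← add_div, div_self ht.ne'])

lemma convexOn_perspective [AddCommMonoid β] [PartialOrder β] [Module 𝕜 β] [PosSMulMono 𝕜 β]
    {f : E → β} (hf : ConvexOn 𝕜 s f) :
    ConvexOn 𝕜 {p : E × 𝕜 | 0 < p.2 ∧ p.2⁻¹ • p.1 ∈ s} (fun p ↦ p.2 • f (p.2⁻¹ • p.1)) := by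
  refine ⟨convex_perspective_domain hf.1, ?_⟩
  rintro ⟨x₁, t₁⟩ ⟨ht₁, hx₁⟩ ⟨x₂, t₂⟩ ⟨ht₂, hx₂⟩ c₁ c₂ hc₁ hc₂ hc
  have ht : 0 < c₁ * t₁ + c₂ * t₂ := convex_Ioi 0 ht₁ ht₂ hc₁ hc₂ hc
  have jensen := (convexOn_iff_div.1 hf).2 hx₁ hx₂
    (mul_nonneg hc₁ ht₁.le) (mul_nonneg hc₂ ht₂.le) ht
  simp only [Prod.smul_mk, Prod.mk_add_mk, smul_eq_mul]
  rw [inv_smul_smul_add_smul ht₁.ne' ht₂.ne']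
  refine (smul_le_smul_of_nonneg_left jensen ht.le).trans_eq ?_
  simp only [smul_add, smul_smul, mul_div_cancel₀ _ ht.ne']

end Perspective

lemma convexOn_sub_one_mul_log : ConvexOn ℝ (Ioi 0) (fun x : ℝ ↦ (x - 1) * Real.log x) := by
  refine ((Real.convexOn_mul_log.subset Ioi_subset_Ici_self (convex_Ioi 0)).sub
    strictConcaveOn_log_Ioi.concaveOn).congr fun x _ ↦ ?_
  simp only [Pi.sub_apply]
  ring

lemma convexOn_sub_mul_log_div :
    ConvexOn ℝ (Ioi 0 ×ˢ Ioi 0) (fun p : ℝ × ℝ ↦ (p.1 - p.2) * Real.log (p.1 / p.2)) := by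
  refine ((convexOn_perspective convexOn_sub_one_mul_log).subset ?_
    ((convex_Ioi 0).prod (convex_Ioi 0))).congr ?_
  · rintro ⟨u, v⟩ ⟨hu, hv⟩
    exact ⟨hv, mem_Ioi.2 (smul_pos (inv_pos.2 hv) hu)⟩
  · rintro ⟨u, v⟩ ⟨-, hv⟩
    have hv₀ : v ≠ 0 := ne_of_gt hv
    simp only [smul_eq_mul, ← div_eq_inv_mul]
    field_simp

lemma convexOn_sub_mul_mul_log_one_add_mul_div (c d : ℝ) :
    ConvexOn ℝ {x | 0 < 1 + c * x ∧ 0 < 1 + d * x}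
      (fun x ↦ (c - d) * x * Real.log ((1 + c * x) / (1 + d * x))) := by
  have line_apply (x : ℝ) : AffineMap.lineMap (1, 1) (1 + c, 1 + d) x = (1 + c * x, 1 + d * x) := by
    ext <;> simp [AffineMap.lineMap_apply, mul_comm, add_comm]
  have hline := convexOn_sub_mul_log_div.comp_affineMap (AffineMap.lineMap (1, 1) (1 + c, 1 + d))
  simp only [Function.comp_def, preimage, mem_prod, mem_Ioi, line_apply] at hline
  exact hline.congr fun x _ ↦ by ring

theorem attraction_contribution_concave_general
    (a b : ℝ) (ha : 0 ≤ a) (hb : b ≠ 0)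
    (F : ℝ → ℝ)
    (hF : ∀ n : ℝ, F n = (a * n / (2 * Real.sqrt 2 * b)) *
      Real.log ((1 + (1 - Real.sqrt 2) * b * n) / (1 + (1 + Real.sqrt 2) * b * n))) :
    ConcaveOn ℝ {n | 0 < 1 + (1 - Real.sqrt 2) * b * n ∧ 0 < 1 + (1 + Real.sqrt 2) * b * n} F := by
  have hscale : 0 ≤ a / (8 * b ^ 2) := by positivity
  have prefactor_eq (n : ℝ) : a * n / (2 * Real.sqrt 2 * b) =
      -(a / (8 * b ^ 2) * (((1 - Real.sqrt 2) * b - (1 + Real.sqrt 2) * b) * n)) := by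
    have hsqrt : Real.sqrt 2 ^ 2 = 2 := Real.sq_sqrt zero_le_two
    field_simp
    linear_combination (-4 * a * n) * hsqrt
  refine ((convexOn_sub_mul_mul_log_one_add_mul_div _ _).smul hscale).neg.congr fun n _ ↦ ?_
  rw [hF, prefactor_eq, Pi.neg_apply, smul_eq_mul, ← mul_assoc, neg_mul]

lemma Ioo_zero_one_div_subset {b : ℝ} (hb : 0 < b) :
    Ioo 0 (1 / b) ⊆
      {n | 0 < 1 + (1 - Real.sqrt 2) * b * n ∧ 0 < 1 + (1 + Real.sqrt 2) * b * n} := by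
  rintro n ⟨hn_pos, hn_lt⟩
  have hbn : b * n < 1 := (lt_div_iff₀' hb).1 hn_lt
  have hsqrt : Real.sqrt 2 - 1 < 1 := by linarith [Real.sqrt_two_lt_three_halves]
  have hprod : (Real.sqrt 2 - 1) * (b * n) < 1 :=
    mul_lt_one_of_nonneg_of_lt_one_right hsqrt.le (by positivity) hbn
  exact ⟨by linarith, by positivity⟩

/-- For `a ≥ 0`, the attraction contribution
`F(n) = (a·n/(2√2·b))·ln((1 + (1 − √2)bn)/(1 + (1 + √2)bn))` is concave on
`(0, 1/b)`. -/
theorem attraction_contribution_concave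
    (a b : ℝ) (ha : 0 ≤ a) (hb : 0 < b)
    (F : ℝ → ℝ)
    (hF : ∀ n : ℝ, F n = (a * n / (2 * Real.sqrt 2 * b)) *
      Real.log ((1 + (1 - Real.sqrt 2) * b * n) / (1 + (1 + Real.sqrt 2) * b * n))) :
    ConcaveOn ℝ (Set.Ioo (0 : ℝ) (1 / b)) F :=
  (attraction_contribution_concave_general a b ha hb.ne' F hF).subset
    (Ioo_zero_one_div_subset hb) (convex_Ioo 0 (1 / b))
end

section
/- Let R, P_c, T_c > 0, m ≥ 0, b > 0, β₁, β₂ ∈ ℝ, and let a(T) = 0.45724·(R²T_c²/P_c)·(1 + m(1 − √(T/T_c)))² and c(T) = a(T)·b^{2/3}·(β₁(1 − T/T_c) + β₂). Suppose T > 0 satisfies 1 + m(1 − √(T/T_c)) ≠ 0 and the condition (1 + m)(β₁(1 − T_r) + β₂) + 4β₁T_r(1 + m(1 − √T_r)) ≤ 0, where T_r = T/T_c. Then c''(T) ≤ 0. In particular, if this condition holds for every T in an open interval I ⊆ (0, ∞) on which 1 + m(1 − √(T/T_c)) ≠ 0, then c is concave on I. -/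
/-!
In the reduced temperature `x = T / T_c` the influence parameter is a nonnegative multiple of
`α² L`, where `α x = 1 + m (1 - √x)` and `L` is affine with slope `-β₁`. Since
`(α²)' = -m α / √x`, `(α²)'' = m (1 + m) / (2 √x ^ 3)` and `L'' = 0`, the Leibniz rule gives
`(α² L)'' = (α²)'' L + 2 (α²)' L' = m / (2 √x ^ 3) * ((1 + m) L + 4 β₁ x α)`,
and for `m ≥ 0` the first factor is nonnegative.
-/

lemma deriv_deriv_const_mul_comp_div (K τ : ℝ) (f : ℝ → ℝ) (t : ℝ) :
    deriv (deriv fun t => K * f (t / τ)) t = K / τ ^ 2 * deriv (deriv f) (t / τ) := by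
  have deriv_comp_div (g : ℝ → ℝ) (t : ℝ) : deriv (fun t => g (t / τ)) t = deriv g (t / τ) / τ := by
    simpa only [div_eq_inv_mul, smul_eq_mul] using deriv_comp_mul_left τ⁻¹ g t
  simp only [deriv_const_mul_field', deriv_comp_div, deriv_div_const]
  ring

lemma concaveOn_const_mul_comp_div {K τ : ℝ} {f : ℝ → ℝ} {s : Set ℝ} (hK : 0 ≤ K) (hτ : τ ≠ 0)
    (hf : ConcaveOn ℝ ((· * τ) ⁻¹' s) f) : ConcaveOn ℝ s fun t => K * f (t / τ) := by
  simpa [Set.preimage_preimage, Function.comp_def, ← div_eq_mul_inv, hτ] using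
    (hf.comp_linearMap (LinearMap.mulRight ℝ τ⁻¹)).smul hK

/-- The square root of Soave's `α`-function, `1 + m (1 - √x)` at reduced temperature `x`; its
square is the temperature dependence of the energy parameter. -/
noncomputable def soaveFactor (m x : ℝ) : ℝ := 1 + m * (1 - √x)

/-- The influence parameter as a function of the reduced temperature `x`, up to the constant
prefactor `0.45724 (R² T_c² / P_c) b ^ (2 / 3)`. -/
noncomputable def reducedInfluence (m β₁ β₂ x : ℝ) : ℝ :=
  soaveFactor m x ^ 2 * (β₁ * (1 - x) + β₂)

section ReducedInfluence

variable {m β₁ β₂ x : ℝ}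

lemma continuous_reducedInfluence : Continuous (reducedInfluence m β₁ β₂) := by
  unfold reducedInfluence soaveFactor
  fun_prop

lemma hasDerivAt_soaveFactor (hx : 0 < x) : HasDerivAt (soaveFactor m) (-m / (2 * √x)) x :=
  ((((Real.hasDerivAt_sqrt hx.ne').const_sub 1).const_mul m).const_add 1).congr_deriv (by ring)

lemma hasDerivAt_soaveFactor_sq (hx : 0 < x) :
    HasDerivAt (fun y => soaveFactor m y ^ 2) (-m * (soaveFactor m x / √x)) x :=
  ((hasDerivAt_soaveFactor hx).pow 2).congr_deriv (by push_cast; ring)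

lemma hasDerivAt_soaveFactor_div_sqrt (hx : 0 < x) :
    HasDerivAt (fun y => soaveFactor m y / √y) (-(1 + m) / (2 * √x ^ 3)) x := by
  have hs : √x ≠ 0 := (Real.sqrt_pos.2 hx).ne'
  refine ((hasDerivAt_soaveFactor hx).div (Real.hasDerivAt_sqrt hx.ne') hs).congr_deriv ?_
  unfold soaveFactor
  field_simp
  ring

lemma hasDerivAt_mul_one_sub_add (β₁ β₂ x : ℝ) :
    HasDerivAt (fun y => β₁ * (1 - y) + β₂) (-β₁) x :=
  ((((hasDerivAt_id x).const_sub 1).const_mul β₁).add_const β₂).congr_deriv (by ring)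

lemma hasDerivAt_reducedInfluence (hx : 0 < x) :
    HasDerivAt (reducedInfluence m β₁ β₂)
      (-m * (soaveFactor m x / √x) * (β₁ * (1 - x) + β₂) - β₁ * soaveFactor m x ^ 2) x :=
  ((hasDerivAt_soaveFactor_sq hx).mul (hasDerivAt_mul_one_sub_add β₁ β₂ x)).congr_deriv
    (by ring)

lemma hasDerivAt_deriv_reducedInfluence (hx : 0 < x) :
    HasDerivAt (deriv (reducedInfluence m β₁ β₂))
      (m / (2 * √x ^ 3) *
        ((1 + m) * (β₁ * (1 - x) + β₂) + 4 * β₁ * x * soaveFactor m x)) x := by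
  have deriv_eq : deriv (reducedInfluence m β₁ β₂) =ᶠ[nhds x] fun y =>
      -m * (soaveFactor m y / √y) * (β₁ * (1 - y) + β₂) - β₁ * soaveFactor m y ^ 2 := by
    filter_upwards [lt_mem_nhds hx] with y hy using (hasDerivAt_reducedInfluence hy).deriv
  have leibniz := (((hasDerivAt_soaveFactor_div_sqrt (m := m) hx).const_mul (-m)).mul
    (hasDerivAt_mul_one_sub_add β₁ β₂ x)).sub
    ((hasDerivAt_soaveFactor_sq (m := m) hx).const_mul β₁)
  refine (leibniz.congr_of_eventuallyEq deriv_eq).congr_deriv ?_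
  have hs : √x ≠ 0 := (Real.sqrt_pos.2 hx).ne'
  have hsq : √x ^ 2 = x := Real.sq_sqrt hx.le
  field_simp
  rw [hsq]
  ring

lemma deriv_deriv_reducedInfluence_nonpos (hm : 0 ≤ m) (hx : 0 < x)
    (h : (1 + m) * (β₁ * (1 - x) + β₂) + 4 * β₁ * x * soaveFactor m x ≤ 0) :
    deriv (deriv (reducedInfluence m β₁ β₂)) x ≤ 0 := by
  rw [(hasDerivAt_deriv_reducedInfluence hx).deriv]
  exact mul_nonpos_of_nonneg_of_nonpos (by positivity) h

lemma concaveOn_reducedInfluence {D : Set ℝ} (hm : 0 ≤ m) (hD : Convex ℝ D)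
    (hD_nonneg : D ⊆ Set.Ici 0)
    (h : ∀ x ∈ interior D,
      (1 + m) * (β₁ * (1 - x) + β₂) + 4 * β₁ * x * soaveFactor m x ≤ 0) :
    ConcaveOn ℝ D (reducedInfluence m β₁ β₂) := by
  have interior_pos : ∀ x ∈ interior D, 0 < x := fun x hx => by
    simpa only [interior_Ici, Set.mem_Ioi] using interior_mono hD_nonneg hx
  exact concaveOn_of_deriv2_nonpos hD continuous_reducedInfluence.continuousOn
    (fun x hx => (hasDerivAt_reducedInfluence
      (interior_pos x hx)).differentiableAt.differentiableWithinAt)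
    (fun x hx => (hasDerivAt_deriv_reducedInfluence
      (interior_pos x hx)).differentiableAt.differentiableWithinAt)
    (fun x hx => deriv_deriv_reducedInfluence_nonpos hm (interior_pos x hx) (h x hx))

end ReducedInfluence

/-- Under condition `(1+m)(β₁(1−T_r)+β₂) + 4β₁T_r(1+m(1−√T_r)) ≤ 0` the influence
parameter satisfies `c''(T) ≤ 0`; in particular, if this holds on an open
interval `I ⊆ (0, ∞)` on which `1 + m(1 − √(T/T_c)) ≠ 0`, then `c` is concave
on `I`. -/
theorem influence_parameter_concave
    (R Pc Tc m b β₁ β₂ : ℝ)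
    (hR : 0 < R) (hPc : 0 < Pc) (hTc : 0 < Tc) (hm : 0 ≤ m) (hb : 0 < b)
    (a c : ℝ → ℝ)
    (ha : ∀ T : ℝ,
      a T = 0.45724 * (R ^ 2 * Tc ^ 2 / Pc) * (1 + m * (1 - Real.sqrt (T / Tc))) ^ 2)
    (hc : ∀ T : ℝ, c T = a T * b ^ ((2 : ℝ) / 3) * (β₁ * (1 - T / Tc) + β₂)) :
    (∀ T : ℝ, 0 < T → 1 + m * (1 - Real.sqrt (T / Tc)) ≠ 0 →
      (1 + m) * (β₁ * (1 - T / Tc) + β₂)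
          + 4 * β₁ * (T / Tc) * (1 + m * (1 - Real.sqrt (T / Tc))) ≤ 0 →
      deriv (deriv c) T ≤ 0) ∧
    (∀ lo hi : ℝ, Set.Ioo lo hi ⊆ Set.Ioi (0 : ℝ) →
      (∀ T ∈ Set.Ioo lo hi, 1 + m * (1 - Real.sqrt (T / Tc)) ≠ 0) →
      (∀ T ∈ Set.Ioo lo hi,
        (1 + m) * (β₁ * (1 - T / Tc) + β₂)
            + 4 * β₁ * (T / Tc) * (1 + m * (1 - Real.sqrt (T / Tc))) ≤ 0) →
      ConcaveOn ℝ (Set.Ioo lo hi) c) := by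
  set K := 0.45724 * (R ^ 2 * Tc ^ 2 / Pc) * b ^ ((2 : ℝ) / 3) with hK
  have hK_nonneg : 0 ≤ K := by positivity
  obtain rfl : c = fun T => K * reducedInfluence m β₁ β₂ (T / Tc) := by
    ext T
    rw [hc, ha, hK, reducedInfluence, soaveFactor]
    ring
  refine ⟨fun T hT _ hcond => ?_, fun lo hi hpos _ hcond => ?_⟩
  · rw [deriv_deriv_const_mul_comp_div]
    exact mul_nonpos_of_nonneg_of_nonpos (by positivity)
      (deriv_deriv_reducedInfluence_nonpos hm (div_pos hT hTc) hcond)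
  · refine concaveOn_const_mul_comp_div hK_nonneg hTc.ne' (concaveOn_reducedInfluence hm
      ((convex_Ioo lo hi).linear_preimage (LinearMap.mulRight ℝ Tc)) ?_ ?_)
    · exact fun x hx => (pos_of_mul_pos_left (hpos hx) hTc.le).le
    · intro x hx
      have hmem : x ∈ (· * Tc) ⁻¹' Set.Ioo lo hi := interior_subset hx
      simpa only [soaveFactor, mul_div_cancel_right₀ x hTc.ne'] using hcond (x * Tc) hmem
end

section
/- Let d ≥ 1, let f_b : ℝ × ℝ → ℝ and c : ℝ → ℝ be smooth (C^∞), and let n, T : ℝ^d → ℝ be smooth. Define μ_b(x) = ∂₁f_b(n(x),T(x)), γ_b(x) = ∂₂f_b(n(x),T(x)), p_b = n·μ_b − f_b(n,T); the chemical potential μ = μ_b − ∇·(c(T)∇n); the pressure p = p_b − n·∇·(c(T)∇n) − (1/2)c(T)|∇n|²; and γ = γ_b + (1/2)c'(T)|∇n|². Then at every x ∈ ℝ^d and for each component j ∈ {1,…,d}: n(x)·∂_j μ(x) − γ(x)·∂_j T(x) = ∂_j p(x) + ∑_{i=1}^{d} ∂_i( c(T)·∂_i n·∂_j n )(x); that is,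 n∇μ − γ∇T = ∇p + ∇·(c(T)(∇n ⊗ ∇n)). -/
/-!
The pressure is the Legendre transform `p = n μ - f` of the free energy density
`f = f_b(n, T) + ½ c(T) |∇n|²`. The chain rule gives `∇f = μ_b ∇n + γ ∇T + ½ c(T) ∇|∇n|²`. By the
symmetry of second derivatives, `∇·(k ∇n ⊗ ∇n) = (∇·(k ∇n)) ∇n + ½ k ∇|∇n|²` for every weight `k`,
so that `∇f = μ ∇n + γ ∇T + ∇·(c(T) ∇n ⊗ ∇n)`. Subtracting this from
`∇(n μ) = n ∇μ + μ ∇n` is the claim.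
-/

variable {E ι : Type*} [NormedAddCommGroup E] [NormedSpace ℝ E] [Fintype ι]

/-- `∇·(k ∇u)`, with divergence and gradient taken along the directions `v i`. The family `v` is
arbitrary; the usual operator on `ℝ^d` is the case of the standard basis. -/
noncomputable def weightedLaplacian (v : ι → E) (k u : E → ℝ) (x : E) : ℝ :=
  ∑ i, fderiv ℝ (fun y => k y * fderiv ℝ u y (v i)) x (v i)

/-- `|∇u|²`, with the gradient taken along the directions `v i`. -/
noncomputable def gradNormSq (v : ι → E) (u : E → ℝ) (x : E) : ℝ :=
  ∑ i, fderiv ℝ u x (v i) ^ 2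

/-- The component along `w` of `∇·(k ∇u ⊗ ∇u)`, the divergence of the capillary (Korteweg) stress,
with the divergence taken along the directions `v i`. -/
noncomputable def capillaryStressDiv (v : ι → E) (k u : E → ℝ) (w x : E) : ℝ :=
  ∑ i, fderiv ℝ (fun y => k y * fderiv ℝ u y (v i) * fderiv ℝ u y w) x (v i)

section Calculus

variable {F : Type*} [NormedAddCommGroup F] [NormedSpace ℝ F] {f : E → F} {u k : E → ℝ} {x : E}

theorem differentiableAt_fderiv_apply (hf : ContDiffAt ℝ 2 f x) (w : E) :
    DifferentiableAt ℝ (fun y => fderiv ℝ f y w) x :=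
  ((hf.fderiv_right (m := 1) (by norm_num)).differentiableAt one_ne_zero).clm_apply
    (differentiableAt_const w)

theorem fderiv_fderiv_apply_comm (hf : ContDiffAt ℝ 2 f x) (w z : E) :
    fderiv ℝ (fun y => fderiv ℝ f y w) x z = fderiv ℝ (fun y => fderiv ℝ f y z) x w := by
  have hdiff : DifferentiableAt ℝ (fderiv ℝ f) x :=
    (hf.fderiv_right (m := 1) (by norm_num)).differentiableAt one_ne_zero
  have hsecond (a b : E) :
      fderiv ℝ (fun y => fderiv ℝ f y a) x b = fderiv ℝ (fderiv ℝ f) x b a := by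
    simp [fderiv_clm_apply hdiff (differentiableAt_const a)]
  rw [hsecond, hsecond]
  exact hf.isSymmSndFDerivAt (by simp) z w

theorem differentiableAt_gradNormSq (v : ι → E) (hu : ContDiffAt ℝ 2 u x) :
    DifferentiableAt ℝ (gradNormSq v u) x :=
  DifferentiableAt.fun_sum fun i _ => (differentiableAt_fderiv_apply hu (v i)).pow 2

theorem fderiv_gradNormSq (v : ι → E) (hu : ContDiffAt ℝ 2 u x) (w : E) :
    fderiv ℝ (gradNormSq v u) x w =
      2 * ∑ i, fderiv ℝ u x (v i) * fderiv ℝ (fun y => fderiv ℝ u y (v i)) x w := by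
  have hdiff (i : ι) := differentiableAt_fderiv_apply hu (v i)
  unfold gradNormSq
  rw [fderiv_fun_sum fun i _ => (hdiff i).fun_pow 2]
  simp [fderiv_fun_pow 2 (hdiff _), Finset.mul_sum, mul_assoc]

theorem capillaryStressDiv_eq (v : ι → E) (hk : DifferentiableAt ℝ k x)
    (hu : ContDiffAt ℝ 2 u x) (w : E) :
    capillaryStressDiv v k u w x =
      weightedLaplacian v k u x * fderiv ℝ u x w + 1 / 2 * k x * fderiv ℝ (gradNormSq v u) x w := by
  have hterm (i : ι) :
      fderiv ℝ (fun y => k y * fderiv ℝ u y (v i) * fderiv ℝ u y w) x (v i) =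
        fderiv ℝ (fun y => k y * fderiv ℝ u y (v i)) x (v i) * fderiv ℝ u x w +
          k x * (fderiv ℝ u x (v i) * fderiv ℝ (fun y => fderiv ℝ u y (v i)) x w) := by
    rw [fderiv_fun_mul (hk.fun_mul (differentiableAt_fderiv_apply hu (v i)))
        (differentiableAt_fderiv_apply hu w), fderiv_fderiv_apply_comm hu (v i) w]
    simp only [add_apply, smul_apply, smul_eq_mul]
    ring
  rw [fderiv_gradNormSq v hu, capillaryStressDiv, weightedLaplacian, Finset.sum_congr rfl
    fun i _ => hterm i, Finset.sum_add_distrib, ← Finset.sum_mul, ← Finset.mul_sum]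
  ring

theorem differentiable_weightedLaplacian (v : ι → E) (hk : ContDiff ℝ 2 k) (hu : ContDiff ℝ 3 u) :
    Differentiable ℝ (weightedLaplacian v k u) := by
  refine Differentiable.fun_sum fun i _ x => differentiableAt_fderiv_apply (x := x) ?_ (v i)
  exact (hk.mul ((hu.fderiv_right (m := 2) (by norm_num)).clm_apply contDiff_const)).contDiffAt

theorem fderiv_comp₂_apply {φ : ℝ → ℝ → ℝ} {g h : E → ℝ}
    (hf : DifferentiableAt ℝ (fun q : ℝ × ℝ => φ q.1 q.2) (g x, h x))
    (hg : DifferentiableAt ℝ g x) (hh : DifferentiableAt ℝ h x) (w : E) :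
    fderiv ℝ (fun y => φ (g y) (h y)) x w =
      deriv (fun s => φ s (h x)) (g x) * fderiv ℝ g x w +
        deriv (fun s => φ (g x) s) (h x) * fderiv ℝ h x w := by
  let Φ : ℝ × ℝ → ℝ := fun q => φ q.1 q.2
  let L := fderiv ℝ Φ (g x, h x)
  have hL : HasFDerivAt Φ L (g x, h x) := hf.hasFDerivAt
  have hfst : HasDerivAt (fun s => φ s (h x)) (L (1, 0)) (g x) :=
    hL.comp_hasDerivAt (l := Φ) (g x) ((hasDerivAt_id (g x)).prodMk (hasDerivAt_const (g x) (h x)))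
  have hsnd : HasDerivAt (fun s => φ (g x) s) (L (0, 1)) (h x) :=
    hL.comp_hasDerivAt (l := Φ) (h x) ((hasDerivAt_const (h x) (g x)).prodMk (hasDerivAt_id (h x)))
  have hcomp : fderiv ℝ (fun y => φ (g y) (h y)) x w = L (fderiv ℝ g x w, fderiv ℝ h x w) :=
    DFunLike.congr_fun (hL.comp (g := Φ) x (hg.hasFDerivAt.prodMk hh.hasFDerivAt)).fderiv w
  have hsplit : (fderiv ℝ g x w, fderiv ℝ h x w) =
      fderiv ℝ g x w • ((1, 0) : ℝ × ℝ) + fderiv ℝ h x w • ((0, 1) : ℝ × ℝ) := by simp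
  rw [hcomp, hfst.deriv, hsnd.deriv, hsplit, map_add, map_smul, map_smul, smul_eq_mul, smul_eq_mul,
    mul_comm (L (1, 0)), mul_comm (L (0, 1))]

end Calculus

section SquareGradientFluid

variable (v : ι → E) (fb : ℝ → ℝ → ℝ) (c : ℝ → ℝ) (n T : E → ℝ)

/-- The Helmholtz free energy density `f_b(n, T) + ½ c(T) |∇n|²` of an inhomogeneous fluid. -/
noncomputable def freeEnergyDensity (x : E) : ℝ :=
  fb (n x) (T x) + 1 / 2 * c (T x) * gradNormSq v n x

/-- The bulk chemical potential `μ_b = ∂₁f_b(n, T)`. -/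
noncomputable def bulkChemicalPotential (x : E) : ℝ :=
  deriv (fun s => fb s (T x)) (n x)

/-- The full chemical potential `μ = μ_b - ∇·(c(T) ∇n)`. -/
noncomputable def chemicalPotential (x : E) : ℝ :=
  bulkChemicalPotential fb n T x - weightedLaplacian v (fun y => c (T y)) n x

/-- The coefficient `γ = ∂₂f_b(n, T) + ½ c'(T) |∇n|²`. This is the derivative of the free energy
density in the temperature, hence the negative of the entropy density. -/
noncomputable def negEntropyDensity (x : E) : ℝ :=
  deriv (fun s => fb (n x) s) (T x) + 1 / 2 * deriv c (T x) * gradNormSq v n x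

/-- The full pressure `p = p_b - n ∇·(c(T) ∇n) - ½ c(T) |∇n|²`, where the bulk pressure is
`p_b = n μ_b - f_b(n, T)`. -/
noncomputable def fluidPressure (x : E) : ℝ :=
  n x * bulkChemicalPotential fb n T x - fb (n x) (T x)
    - n x * weightedLaplacian v (fun y => c (T y)) n x - 1 / 2 * c (T x) * gradNormSq v n x

theorem fluidPressure_eq_mul_chemicalPotential_sub_freeEnergyDensity :
    fluidPressure v fb c n T =
      fun x => n x * chemicalPotential v fb c n T x - freeEnergyDensity v fb c n T x := by
  funext x
  simp only [fluidPressure, chemicalPotential, freeEnergyDensity]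
  ring

variable {fb c n T}

theorem differentiable_bulkChemicalPotential
    (hfb : ContDiff ℝ 2 (fun q : ℝ × ℝ => fb q.1 q.2))
    (hn : ContDiff ℝ 1 n) (hT : ContDiff ℝ 2 T) :
    Differentiable ℝ (bulkChemicalPotential fb n T) := by
  have hsection : ContDiff ℝ 2 (Function.uncurry fun y s => fb s (T y)) :=
    hfb.comp (contDiff_snd.prodMk (hT.comp contDiff_fst))
  exact (hsection.fderiv_apply hn contDiff_const (by norm_num)).differentiable one_ne_zero

theorem differentiable_chemicalPotential (hfb : ContDiff ℝ 2 (fun q : ℝ × ℝ => fb q.1 q.2))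
    (hc : ContDiff ℝ 2 c) (hn : ContDiff ℝ 3 n) (hT : ContDiff ℝ 2 T) :
    Differentiable ℝ (chemicalPotential v fb c n T) :=
  (differentiable_bulkChemicalPotential hfb (hn.of_le (by norm_num)) hT).sub
    (differentiable_weightedLaplacian v (hc.comp hT) hn)

theorem differentiableAt_freeEnergyDensity {x : E}
    (hfb : DifferentiableAt ℝ (fun q : ℝ × ℝ => fb q.1 q.2) (n x, T x))
    (hc : DifferentiableAt ℝ c (T x)) (hn : ContDiffAt ℝ 2 n x) (hT : DifferentiableAt ℝ T x) :
    DifferentiableAt ℝ (freeEnergyDensity v fb c n T) x :=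
  (hfb.comp x ((hn.differentiableAt two_ne_zero).prodMk hT)).add
    (((hc.comp x hT).const_mul (1 / 2)).mul (differentiableAt_gradNormSq v hn))

theorem fderiv_freeEnergyDensity {x : E}
    (hfb : DifferentiableAt ℝ (fun q : ℝ × ℝ => fb q.1 q.2) (n x, T x))
    (hc : DifferentiableAt ℝ c (T x)) (hn : ContDiffAt ℝ 2 n x) (hT : DifferentiableAt ℝ T x)
    (w : E) :
    fderiv ℝ (freeEnergyDensity v fb c n T) x w =
      chemicalPotential v fb c n T x * fderiv ℝ n x w
        + negEntropyDensity v fb c n T x * fderiv ℝ T x w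
        + capillaryStressDiv v (fun y => c (T y)) n w x := by
  have hn' : DifferentiableAt ℝ n x := hn.differentiableAt two_ne_zero
  have hcT : DifferentiableAt ℝ (fun y => c (T y)) x := hc.comp x hT
  have hbulk : fderiv ℝ (fun y => fb (n y) (T y)) x w =
      bulkChemicalPotential fb n T x * fderiv ℝ n x w +
        deriv (fun s => fb (n x) s) (T x) * fderiv ℝ T x w :=
    fderiv_comp₂_apply hfb hn' hT w
  have hinfluence : fderiv ℝ (fun y => c (T y)) x w = deriv c (T x) * fderiv ℝ T x w :=
    DFunLike.congr_fun (hc.hasDerivAt.comp_hasFDerivAt x hT.hasFDerivAt).fderiv w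
  have hgradient : fderiv ℝ (fun y => 1 / 2 * c (T y) * gradNormSq v n y) x w =
      1 / 2 * c (T x) * fderiv ℝ (gradNormSq v n) x w +
        1 / 2 * deriv c (T x) * gradNormSq v n x * fderiv ℝ T x w := by
    rw [fderiv_fun_mul (hcT.const_mul (1 / 2)) (differentiableAt_gradNormSq v hn),
      fderiv_const_mul hcT]
    simp only [add_apply, smul_apply, smul_eq_mul, hinfluence]
    ring
  have hsum : fderiv ℝ (freeEnergyDensity v fb c n T) x w =
      fderiv ℝ (fun y => fb (n y) (T y)) x w +
        fderiv ℝ (fun y => 1 / 2 * c (T y) * gradNormSq v n y) x w :=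
    DFunLike.congr_fun (fderiv_fun_add (hfb.comp x (hn'.prodMk hT))
      ((hcT.const_mul (1 / 2)).mul (differentiableAt_gradNormSq v hn))) w
  rw [hsum, hbulk, hgradient, capillaryStressDiv_eq v hcT hn, chemicalPotential, negEntropyDensity]
  ring

theorem pressure_chemical_potential_gradient_relation_general
    (hfb : ContDiff ℝ 2 (fun q : ℝ × ℝ => fb q.1 q.2)) (hc : ContDiff ℝ 2 c)
    (hn : ContDiff ℝ 3 n) (hT : ContDiff ℝ 2 T) (x w : E) :
    n x * fderiv ℝ (chemicalPotential v fb c n T) x w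
        - negEntropyDensity v fb c n T x * fderiv ℝ T x w =
      fderiv ℝ (fluidPressure v fb c n T) x w
        + capillaryStressDiv v (fun y => c (T y)) n w x := by
  have hfb' : DifferentiableAt ℝ (fun q : ℝ × ℝ => fb q.1 q.2) (n x, T x) :=
    hfb.differentiable two_ne_zero _
  have hc' : DifferentiableAt ℝ c (T x) := hc.differentiable two_ne_zero _
  have hT' : DifferentiableAt ℝ T x := hT.differentiable two_ne_zero x
  have hn₁ : DifferentiableAt ℝ n x := hn.differentiable three_ne_zero x
  have hn₂ : ContDiffAt ℝ 2 n x := (hn.of_le (by norm_num)).contDiffAt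
  have hμ : DifferentiableAt ℝ (chemicalPotential v fb c n T) x :=
    differentiable_chemicalPotential v hfb hc hn hT x
  have hpressure : fderiv ℝ (fluidPressure v fb c n T) x w =
      n x * fderiv ℝ (chemicalPotential v fb c n T) x w
        + chemicalPotential v fb c n T x * fderiv ℝ n x w
        - fderiv ℝ (freeEnergyDensity v fb c n T) x w := by
    rw [fluidPressure_eq_mul_chemicalPotential_sub_freeEnergyDensity,
      fderiv_fun_sub (hn₁.fun_mul hμ) (differentiableAt_freeEnergyDensity v hfb' hc' hn₂ hT'),
      fderiv_fun_mul hn₁ hμ]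
    simp
  rw [hpressure, fderiv_freeEnergyDensity v hfb' hc' hn₂ hT']
  ring

end SquareGradientFluid

/-- The relation `n∇μ − γ∇T = ∇p + ∇·(c(T)(∇n ⊗ ∇n))` associating the pressure
gradient with the gradients of temperature and chemical potential, stated
componentwise with `pd i f x = ∂_i f(x)` on `ℝ^d`. -/
theorem pressure_chemical_potential_gradient_relation
    (d : ℕ) (hd : 1 ≤ d)
    (fb : ℝ → ℝ → ℝ) (hfb : ContDiff ℝ (⊤ : ℕ∞) (fun q : ℝ × ℝ => fb q.1 q.2))
    (c : ℝ → ℝ) (hc : ContDiff ℝ (⊤ : ℕ∞) c)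
    (n T : EuclideanSpace ℝ (Fin d) → ℝ)
    (hn : ContDiff ℝ (⊤ : ℕ∞) n) (hT : ContDiff ℝ (⊤ : ℕ∞) T)
    (pd : Fin d → (EuclideanSpace ℝ (Fin d) → ℝ) → EuclideanSpace ℝ (Fin d) → ℝ)
    (hpd : ∀ (i : Fin d) (f : EuclideanSpace ℝ (Fin d) → ℝ) x,
      pd i f x = fderiv ℝ f x (EuclideanSpace.single i 1))
    (μb γb pb μ p γ : EuclideanSpace ℝ (Fin d) → ℝ)
    (hμb : ∀ x, μb x = deriv (fun s => fb s (T x)) (n x))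
    (hγb : ∀ x, γb x = deriv (fun s => fb (n x) s) (T x))
    (hpb : ∀ x, pb x = n x * μb x - fb (n x) (T x))
    (hμ : ∀ x, μ x = μb x - ∑ i : Fin d, pd i (fun y => c (T y) * pd i n y) x)
    (hp : ∀ x, p x = pb x - n x * (∑ i : Fin d, pd i (fun y => c (T y) * pd i n y) x)
      - (1 / 2) * c (T x) * ∑ i : Fin d, (pd i n x) ^ 2)
    (hγ : ∀ x, γ x = γb x + (1 / 2) * deriv c (T x) * ∑ i : Fin d, (pd i n x) ^ 2) :
    ∀ (x : EuclideanSpace ℝ (Fin d)) (j : Fin d),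
      n x * pd j μ x - γ x * pd j T x
        = pd j p x + ∑ i : Fin d, pd i (fun y => c (T y) * pd i n y * pd j n y) x := by
  intro x j
  let e : Fin d → EuclideanSpace ℝ (Fin d) := fun i => EuclideanSpace.single i 1
  obtain rfl : pd = fun i f y => fderiv ℝ f y (e i) :=
    funext fun i => funext fun f => funext (hpd i f)
  obtain rfl : μ = chemicalPotential e fb c n T := funext fun y => by rw [hμ, hμb]; rfl
  obtain rfl : p = fluidPressure e fb c n T := funext fun y => by rw [hp, hpb, hμb]; rfl
  rw [hγ, hγb]
  exact pressure_chemical_potential_gradient_relation_general e (contDiff_infty.1 hfb 2)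
    (contDiff_infty.1 hc 2) (contDiff_infty.1 hn 3) (contDiff_infty.1 hT 2) x (e j)
end

section
/- Let I, J ⊆ ℝ be intervals and let g, h : ℝ × ℝ → ℝ be differentiable functions such that: (i) for each fixed T ∈ J, the map n ↦ g(n,T) is convex on I and the map n ↦ h(n,T) is concave on I; and (ii) for each fixed n ∈ I, the map T ↦ g(n,T) + h(n,T) is concave on J. Set f = g + h. Then for all n₀, n₁ ∈ I and T₀, T₁ ∈ J: f(n₁,T₁) − f(n₀,T₀) ≤ ( ∂₁g(n₁,T₁) + ∂₁h(n₀,T₁) )·(n₁ − n₀) + ∂₂f(n₀,T₀)·(T₁ − T₀), where ∂₁ and ∂₂ denote the partial derivatives with respect to the first and second arguments. -/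
/-!
Pass from `(n₀, T₀)` to `(n₁, T₁)` through the intermediate state `(n₀, T₁)`. A concave function
lies below its tangent at the initial point, which bounds the increments of `h` in `n` and of
`g + h` in `T`. For the convex `g`, the tangent at the final point `n₁` lies below `g (n₀, T₁)`,
so `∂₁g` has to be taken at the new state while the other derivatives are taken at the old density.
-/

section TangentInequality

variable {E : Type*} [AddCommGroup E] [Module ℝ E] {S : Set E} {f : E → ℝ} {f' : ℝ} {x y : E}

theorem le_sub_of_convexOn_of_hasLineDerivWithinAt (hf : ConvexOn ℝ S f) (hx : x ∈ S) (hy : y ∈ S)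
    (hf' : HasLineDerivWithinAt ℝ f f' S x (y - x)) : f' ≤ f y - f x := by
  let line : ℝ →ᵃ[ℝ] E := AffineMap.lineMap x y
  have line_eq (t : ℝ) : line t = x + t • (y - x) := by
    rw [AffineMap.lineMap_apply_module', add_comm]
  have line_zero : line 0 = x := AffineMap.lineMap_apply_zero x y
  have line_one : line 1 = y := AffineMap.lineMap_apply_one x y
  have deriv_line : HasDerivWithinAt (f ∘ line) f' (line ⁻¹' S) 0 := by
    simp only [HasLineDerivWithinAt, ← line_eq] at hf'
    exact hf'
  have le_slope : f' ≤ slope (f ∘ line) 0 1 :=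
    (hf.comp_affineMap line).le_slope_of_hasDerivWithinAt
      (by simpa only [Set.mem_preimage, line_zero]) (by simpa only [Set.mem_preimage, line_one])
      one_pos deriv_line
  simpa [slope_def_field, line_zero, line_one] using le_slope

theorem sub_le_of_concaveOn_of_hasLineDerivWithinAt (hf : ConcaveOn ℝ S f) (hx : x ∈ S)
    (hy : y ∈ S) (hf' : HasLineDerivWithinAt ℝ f f' S x (y - x)) : f y - f x ≤ f' := by
  have neg_tangent : -f' ≤ -f y - -f x :=
    le_sub_of_convexOn_of_hasLineDerivWithinAt (f := -f) hf.neg hx hy (HasDerivWithinAt.neg hf')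
  linarith

end TangentInequality

theorem convex_concave_splitting_inequality_general {E F : Type*}
    [NormedAddCommGroup E] [NormedSpace ℝ E] [NormedAddCommGroup F] [NormedSpace ℝ F]
    {I : Set E} {J : Set F} {g h : E × F → ℝ} {n₀ n₁ : E} {T₀ T₁ : F}
    {g' h' : E →L[ℝ] ℝ} {f' : F →L[ℝ] ℝ}
    (hn₀ : n₀ ∈ I) (hn₁ : n₁ ∈ I) (hT₀ : T₀ ∈ J) (hT₁ : T₁ ∈ J)
    (hgconv : ConvexOn ℝ I (fun n => g (n, T₁)))
    (hhconc : ConcaveOn ℝ I (fun n => h (n, T₁)))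
    (hfconc : ConcaveOn ℝ J (fun T => g (n₀, T) + h (n₀, T)))
    (hg' : HasFDerivWithinAt (fun n => g (n, T₁)) g' I n₁)
    (hh' : HasFDerivWithinAt (fun n => h (n, T₁)) h' I n₀)
    (hf' : HasFDerivWithinAt (fun T => g (n₀, T) + h (n₀, T)) f' J T₀) :
    (g (n₁, T₁) + h (n₁, T₁)) - (g (n₀, T₀) + h (n₀, T₀))
      ≤ (g' + h') (n₁ - n₀) + f' (T₁ - T₀) := by
  have convex_part : g (n₁, T₁) - g (n₀, T₁) ≤ g' (n₁ - n₀) := by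
    have tangent_at_n₁ : g' (n₀ - n₁) ≤ g (n₀, T₁) - g (n₁, T₁) :=
      le_sub_of_convexOn_of_hasLineDerivWithinAt (f := fun n => g (n, T₁)) hgconv hn₁ hn₀
        (hg'.hasLineDerivWithinAt _)
    rw [← neg_sub n₁ n₀, map_neg] at tangent_at_n₁
    linarith
  have concave_part : h (n₁, T₁) - h (n₀, T₁) ≤ h' (n₁ - n₀) :=
    sub_le_of_concaveOn_of_hasLineDerivWithinAt (f := fun n => h (n, T₁)) hhconc hn₀ hn₁
      (hh'.hasLineDerivWithinAt _)
  have temperature_part :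
      (g (n₀, T₁) + h (n₀, T₁)) - (g (n₀, T₀) + h (n₀, T₀)) ≤ f' (T₁ - T₀) :=
    sub_le_of_concaveOn_of_hasLineDerivWithinAt (f := fun T => g (n₀, T) + h (n₀, T))
      hfconc hT₀ hT₁ (hf'.hasLineDerivWithinAt _)
  calc (g (n₁, T₁) + h (n₁, T₁)) - (g (n₀, T₀) + h (n₀, T₀))
      = (g (n₁, T₁) - g (n₀, T₁)) + (h (n₁, T₁) - h (n₀, T₁))
          + ((g (n₀, T₁) + h (n₀, T₁)) - (g (n₀, T₀) + h (n₀, T₀))) := by ring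
    _ ≤ g' (n₁ - n₀) + h' (n₁ - n₀) + f' (T₁ - T₀) :=
        add_le_add (add_le_add convex_part concave_part) temperature_part
    _ = (g' + h') (n₁ - n₀) + f' (T₁ - T₀) := by rw [add_apply]

/-- Two-variable convex–concave splitting inequality: if `n ↦ g(n,T)` is convex
and `n ↦ h(n,T)` is concave on `I` for each `T ∈ J`, and `T ↦ g(n,T) + h(n,T)`
is concave on `J` for each `n ∈ I`, then with `f = g + h`,
`f(n₁,T₁) − f(n₀,T₀) ≤ (∂₁g(n₁,T₁) + ∂₁h(n₀,T₁))(n₁−n₀) + ∂₂f(n₀,T₀)(T₁−T₀)`. -/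
theorem convex_concave_splitting_inequality
    (I J : Set ℝ) (hI : Convex ℝ I) (hJ : Convex ℝ J)
    (g h : ℝ × ℝ → ℝ) (hg : Differentiable ℝ g) (hh : Differentiable ℝ h)
    (hgconv : ∀ T ∈ J, ConvexOn ℝ I (fun s => g (s, T)))
    (hhconc : ∀ T ∈ J, ConcaveOn ℝ I (fun s => h (s, T)))
    (hfconc : ∀ n ∈ I, ConcaveOn ℝ J (fun s => g (n, s) + h (n, s))) :
    ∀ n₀ ∈ I, ∀ n₁ ∈ I, ∀ T₀ ∈ J, ∀ T₁ ∈ J,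
      (g (n₁, T₁) + h (n₁, T₁)) - (g (n₀, T₀) + h (n₀, T₀))
        ≤ (deriv (fun s => g (s, T₁)) n₁ + deriv (fun s => h (s, T₁)) n₀) * (n₁ - n₀)
          + deriv (fun s => g (n₀, s) + h (n₀, s)) T₀ * (T₁ - T₀) := by
  intro n₀ hn₀ n₁ hn₁ T₀ hT₀ T₁ hT₁
  simpa only [add_apply, fderiv_eq_smul_deriv, smul_eq_mul, ← mul_add, mul_comm] using
    convex_concave_splitting_inequality_general hn₀ hn₁ hT₀ hT₁
      (hgconv T₁ hT₁) (hhconc T₁ hT₁) (hfconc n₀ hn₀)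
      (DifferentiableAt.hasFDerivAt (by fun_prop)).hasFDerivWithinAt
      (DifferentiableAt.hasFDerivAt (by fun_prop)).hasFDerivWithinAt
      (DifferentiableAt.hasFDerivAt (by fun_prop)).hasFDerivWithinAt
end
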